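/- arXiv:2410.02969 — 3 statements merged into one kernel-verified Lean document; each statement's English description precedes it below -/
import Mathlib

section
/- The space W is complete: if {w_n} ⊆ W is a Cauchy sequence for the norm ‖·‖_{s,p⃗(x,y)} (i.e. for every ε > 0 there is M such that ‖w_n − w_m‖_{s,p⃗(x,y)} < ε for all n, m ≥ M), then there exists w ∈ W such that ‖w_n − w‖_{s,p⃗(x,y)} → 0 as n → ∞. -/
/-! Completeness is a Fatou argument. Every term of the norm is a Luxemburg gauge
`sInf {ν > 0 | ρ (f / ν) ≤ 1}` of a weighted modular `ρ f = ∫ |f|^q k dμ` with `1 ≤ q ≤ Q`: for the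
Lebesgue part `k = 1` on `Ω`, and for a Gagliardo seminorm `f` is the difference
`w x - w y` and `k = |x - y|^{-(s q + N)}` on `Ω × Ω`. Since `q` is bounded, functions of
finite modular are stable under scaling and subtraction, and `q ≥ 1` makes their gauges genuine
infima (the set of admissible `ν` is nonempty).

Since `|t| ≤ 1 + |t|^q` and `Ω` has finite measure, a Cauchy sequence for the Lebesgue gauge is
Cauchy in `L¹(Ω)`, hence has a subsequence converging almost everywhere on `Ω` to a measurable `v`
(`exists_subseq_ae_tendsto`). The differences `w x - w y` then converge almost everywhere on
`Ω × Ω` along the same subsequence. Fatou's lemma along it gives `ρ ((u n - v) / ε) ≤ 1` for large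
`n` and each modular `ρ` (`complete_of_ae_tendsto`), which is convergence in each gauge, and it
places `v` in the space. -/


open MeasureTheory ENNReal Filter Topology

noncomputable section

abbrev Euc (N : ℕ) := EuclideanSpace ℝ (Fin N)

/-- Luxemburg norm on the variable exponent Lebesgue space `L^{q(x)}(Ω)`. -/
def luxNorm {N : ℕ} (Ω : Set (Euc N)) (q : Euc N → ℝ) (w : Euc N → ℝ) : ℝ :=
  sInf {ν : ℝ | 0 < ν ∧ (∫⁻ x in Ω, ENNReal.ofReal (|w x / ν| ^ q x)) ≤ 1}

/-- Modular of the variable exponent Lebesgue space. -/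
def luxModular {N : ℕ} (Ω : Set (Euc N)) (q : Euc N → ℝ) (w : Euc N → ℝ) : ℝ≥0∞ :=
  ∫⁻ x in Ω, ENNReal.ofReal (|w x| ^ q x)

/-- Variable exponent Gagliardo seminorm over a set `S` of pairs. -/
def gagSemi {N : ℕ} (S : Set (Euc N × Euc N)) (s : ℝ) (p : Euc N × Euc N → ℝ)
    (w : Euc N → ℝ) : ℝ :=
  sInf {ν : ℝ | 0 < ν ∧ (∫⁻ z in S, ENNReal.ofReal
      (|w z.1 - w z.2| ^ p z / (ν ^ p z * ‖z.1 - z.2‖ ^ (s * p z + N)))) ≤ 1}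

/-- Gagliardo modular over a set `S` of pairs. -/
def gagModular {N : ℕ} (S : Set (Euc N × Euc N)) (s : ℝ) (p : Euc N × Euc N → ℝ)
    (w : Euc N → ℝ) : ℝ≥0∞ :=
  ∫⁻ z in S, ENNReal.ofReal (|w z.1 - w z.2| ^ p z / ‖z.1 - z.2‖ ^ (s * p z + N))

/-- Anisotropic Gagliardo seminorm: sum over directions. -/
def WSeminorm {N : ℕ} (S : Set (Euc N × Euc N)) (s : ℝ)
    (p : Fin N → Euc N × Euc N → ℝ) (w : Euc N → ℝ) : ℝ :=
  ∑ i, gagSemi S s (p i) w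

/-- Anisotropic modular: sum over directions. -/
def WModular {N : ℕ} (S : Set (Euc N × Euc N)) (s : ℝ)
    (p : Fin N → Euc N × Euc N → ℝ) (w : Euc N → ℝ) : ℝ≥0∞ :=
  ∑ i, gagModular S s (p i) w

/-- Norm of the anisotropic fractional Sobolev space with variable exponent. -/
def WNorm {N : ℕ} (Ω : Set (Euc N)) (S : Set (Euc N × Euc N)) (s : ℝ)
    (p : Fin N → Euc N × Euc N → ℝ) (pM : Euc N → ℝ) (w : Euc N → ℝ) : ℝ :=
  WSeminorm S s p w + luxNorm Ω pM w

/-- Membership in the anisotropic fractional Sobolev space with variable exponent. -/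
def memW {N : ℕ} (Ω : Set (Euc N)) (S : Set (Euc N × Euc N)) (s : ℝ)
    (p : Fin N → Euc N × Euc N → ℝ) (pM : Euc N → ℝ) (w : Euc N → ℝ) : Prop :=
  Measurable w ∧ (∫⁻ x in Ω, ENNReal.ofReal (|w x| ^ pM x)) < ⊤ ∧
    ∀ i, ∃ ν > (0:ℝ), (∫⁻ z in S, ENNReal.ofReal
      (|w z.1 - w z.2| ^ p i z / (ν ^ p i z * ‖z.1 - z.2‖ ^ (s * p i z + N)))) < ⊤

/-! ### Modulars and Luxemburg gauges with variable exponent -/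

/-- The weighted modular `∫ |f|^q k dμ` with variable exponent `q` and real weight `k`. -/
def wMod {X : Type*} [MeasurableSpace X] (μ : Measure X) (q k f : X → ℝ) : ℝ≥0∞ :=
  ∫⁻ x, ENNReal.ofReal (|f x| ^ q x * k x) ∂μ

/-- The Luxemburg gauge of `wMod`. As an infimum of reals it is `0` when no `ν` is admissible. -/
def wLux {X : Type*} [MeasurableSpace X] (μ : Measure X) (q k f : X → ℝ) : ℝ :=
  sInf {ν : ℝ | 0 < ν ∧ wMod μ q k (fun x => f x / ν) ≤ 1}

section Modular

variable {X : Type*} [MeasurableSpace X] {μ : Measure X} {q k f g : X → ℝ} {Q : ℝ}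

lemma wLux_nonneg : 0 ≤ wLux μ q k f := Real.sInf_nonneg fun _ h => h.1.le

lemma wLux_le {ε : ℝ} (hε : 0 < ε) (h : wMod μ q k (fun x => f x / ε) ≤ 1) :
    wLux μ q k f ≤ ε :=
  csInf_le ⟨0, fun _ h => h.1.le⟩ ⟨hε, h⟩

lemma wMod_mono (hk : ∀ x, 0 ≤ k x) (hq : ∀ᵐ x ∂μ, 1 ≤ q x ∧ q x ≤ Q)
    (h : ∀ x, |f x| ≤ |g x|) : wMod μ q k f ≤ wMod μ q k g := by
  refine lintegral_mono_ae ?_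
  filter_upwards [hq] with x hx
  have h1 : 0 ≤ q x := by linarith [hx.1]
  have h2 := hk x
  have h3 := h x
  gcongr

/-- Bounded exponents make finiteness of the modular invariant under dilation. -/
lemma wMod_scale_lt_top (hk : ∀ x, 0 ≤ k x) (hq : ∀ᵐ x ∂μ, 1 ≤ q x ∧ q x ≤ Q) (c : ℝ)
    (h : wMod μ q k f < ⊤) : wMod μ q k (fun x => c * f x) < ⊤ := by
  have key : wMod μ q k (fun x => c * f x) ≤
      ∫⁻ x, ENNReal.ofReal ((max 1 |c|) ^ Q) * ENNReal.ofReal (|f x| ^ q x * k x) ∂μ := by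
    refine lintegral_mono_ae ?_
    filter_upwards [hq] with x hx
    have h1 : 0 ≤ q x := by linarith [hx.1]
    have h2 := hk x
    rw [← ENNReal.ofReal_mul (by positivity)]
    refine ENNReal.ofReal_le_ofReal ?_
    rw [abs_mul, Real.mul_rpow (abs_nonneg _) (abs_nonneg _), mul_assoc]
    gcongr
    calc |c| ^ q x ≤ (max 1 |c|) ^ q x := by gcongr; exact le_max_right _ _
      _ ≤ (max 1 |c|) ^ Q := Real.rpow_le_rpow_of_exponent_le (le_max_left _ _) hx.2
  refine key.trans_lt ?_
  rw [lintegral_const_mul' _ _ ENNReal.ofReal_ne_top]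
  exact ENNReal.mul_lt_top ENNReal.ofReal_lt_top h

lemma aemeasurable_integrand (hqm : AEMeasurable q μ) (hkm : AEMeasurable k μ)
    (hf : AEMeasurable f μ) :
    AEMeasurable (fun x => ENNReal.ofReal (|f x| ^ q x * k x)) μ := by
  have : AEMeasurable (fun x => |f x|) μ := by simpa [Real.norm_eq_abs] using hf.norm
  exact ((this.pow hqm).mul hkm).ennreal_ofReal

lemma wMod_sub_lt_top (hk : ∀ x, 0 ≤ k x) (hq : ∀ᵐ x ∂μ, 1 ≤ q x ∧ q x ≤ Q)
    (hqm : AEMeasurable q μ) (hkm : AEMeasurable k μ) (hf : AEMeasurable f μ)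
    (h : wMod μ q k f < ⊤) (h' : wMod μ q k g < ⊤) :
    wMod μ q k (fun x => f x - g x) < ⊤ := by
  have hf2 : AEMeasurable (fun x => 2 * f x) μ := hf.const_mul 2
  -- `|f - g| ≤ max |2f| |2g|`, and the power of a maximum is at most the sum of the powers
  have key : wMod μ q k (fun x => f x - g x) ≤
      wMod μ q k (fun x => 2 * f x) + wMod μ q k (fun x => 2 * g x) := by
    unfold wMod
    rw [← lintegral_add_left' (aemeasurable_integrand hqm hkm hf2)]
    refine lintegral_mono_ae ?_
    filter_upwards [hq] with x hx
    have h1 : 0 ≤ q x := by linarith [hx.1]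
    have h2 := hk x
    have h3 := abs_sub (f x) (g x)
    have e1 : |2 * f x| = 2 * |f x| := by rw [abs_mul]; norm_num
    have e2 : |2 * g x| = 2 * |g x| := by rw [abs_mul]; norm_num
    rcases le_total |f x| |g x| with hh | hh
    · refine le_trans (ENNReal.ofReal_le_ofReal ?_) le_add_self
      have h4 : |f x - g x| ≤ |2 * g x| := by linarith
      gcongr
    · refine le_trans (ENNReal.ofReal_le_ofReal ?_) le_self_add
      have h4 : |f x - g x| ≤ |2 * f x| := by linarith
      gcongr
  exact key.trans_lt (ENNReal.add_lt_top.2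
    ⟨wMod_scale_lt_top hk hq 2 h, wMod_scale_lt_top hk hq 2 h'⟩)

/-- For `q ≥ 1` the modular of `f / ν` is at most `ν⁻¹` times that of `f` when `ν ≥ 1`, so a
function of finite modular has an admissible `ν`. -/
lemma exists_wMod_le_one (hk : ∀ x, 0 ≤ k x) (hq : ∀ᵐ x ∂μ, 1 ≤ q x ∧ q x ≤ Q)
    (h : wMod μ q k f < ⊤) : ∃ ν > 0, wMod μ q k (fun x => f x / ν) ≤ 1 := by
  set ν : ℝ := max 1 (wMod μ q k f).toReal with hν
  have hν1 : 1 ≤ ν := le_max_left _ _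
  have hν0 : 0 < ν := by linarith
  refine ⟨ν, hν0, ?_⟩
  have key : wMod μ q k (fun x => f x / ν) ≤
      ∫⁻ x, ENNReal.ofReal ν⁻¹ * ENNReal.ofReal (|f x| ^ q x * k x) ∂μ := by
    refine lintegral_mono_ae ?_
    filter_upwards [hq] with x hx
    have h2 := hk x
    rw [← ENNReal.ofReal_mul (by positivity)]
    refine ENNReal.ofReal_le_ofReal ?_
    rw [div_eq_inv_mul, abs_mul, abs_of_pos (inv_pos.2 hν0),
      Real.mul_rpow (by positivity) (abs_nonneg _), mul_assoc]
    gcongr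
    calc ν⁻¹ ^ q x ≤ ν⁻¹ ^ (1 : ℝ) :=
          Real.rpow_le_rpow_of_exponent_ge (by positivity) (inv_le_one_of_one_le₀ hν1) hx.1
      _ = ν⁻¹ := Real.rpow_one _
  refine key.trans ?_
  rw [lintegral_const_mul' _ _ ENNReal.ofReal_ne_top]
  change ENNReal.ofReal ν⁻¹ * wMod μ q k f ≤ 1
  rw [← ENNReal.ofReal_toReal h.ne, ← ENNReal.ofReal_mul (by positivity), ← ENNReal.ofReal_one]
  refine ENNReal.ofReal_le_ofReal ?_
  calc ν⁻¹ * (wMod μ q k f).toReal ≤ ν⁻¹ * ν := by gcongr; exact le_max_right _ _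
    _ = 1 := inv_mul_cancel₀ hν0.ne'

lemma wMod_div_le_one (hk : ∀ x, 0 ≤ k x) (hq : ∀ᵐ x ∂μ, 1 ≤ q x ∧ q x ≤ Q)
    (h : wMod μ q k f < ⊤) {ε : ℝ} (hlt : wLux μ q k f < ε) :
    wMod μ q k (fun x => f x / ε) ≤ 1 := by
  obtain ⟨ν₀, h₀⟩ := exists_wMod_le_one hk hq h
  obtain ⟨ν, ⟨hν, h1⟩, hνε⟩ := exists_lt_of_csInf_lt (s := {ν : ℝ | 0 < ν ∧
    wMod μ q k (fun x => f x / ν) ≤ 1}) ⟨ν₀, h₀⟩ hlt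
  refine le_trans (wMod_mono hk hq fun x => ?_) h1
  rw [abs_div, abs_div, abs_of_pos hν, abs_of_pos (hν.trans hνε)]
  gcongr

/-! ### Convergence of Cauchy sequences -/

/-- A sequence that is Cauchy for the gauge and converges almost everywhere along a subsequence
converges in the gauge to the same limit. -/
lemma complete_of_ae_tendsto (hk : ∀ x, 0 ≤ k x) (hq : ∀ᵐ x ∂μ, 1 ≤ q x ∧ q x ≤ Q)
    (hqm : AEMeasurable q μ) (hkm : AEMeasurable k μ) {u : ℕ → X → ℝ} {v : X → ℝ}
    (hu : ∀ n, AEMeasurable (u n) μ) (hfin : ∀ n, wMod μ q k (u n) < ⊤)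
    (hcau : ∀ ε > (0 : ℝ), ∃ M : ℕ, ∀ n ≥ M, ∀ m ≥ M,
      wLux μ q k (fun x => u n x - u m x) < ε)
    {φ : ℕ → ℕ} (hφ : Tendsto φ atTop atTop)
    (hlim : ∀ᵐ x ∂μ, Tendsto (fun j => u (φ j) x) atTop (𝓝 (v x))) :
    wMod μ q k v < ⊤ ∧
      Tendsto (fun n => wLux μ q k (fun x => u n x - v x)) atTop (𝓝 0) := by
  have key : ∀ ε > (0 : ℝ), ∃ M : ℕ, ∀ n ≥ M,
      wMod μ q k (fun x => (u n x - v x) / ε) ≤ 1 := by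
    intro ε hε
    obtain ⟨M, hM⟩ := hcau ε hε
    refine ⟨M, fun n hn => ?_⟩
    have hle : wMod μ q k (fun x => (u n x - v x) / ε) ≤
        ∫⁻ x, liminf (fun j => ENNReal.ofReal (|(u n x - u (φ j) x) / ε| ^ q x * k x)) atTop
          ∂μ := by
      refine lintegral_mono_ae ?_
      filter_upwards [hq, hlim] with x hx hl
      refine le_of_eq (Tendsto.liminf_eq ?_).symm
      refine ENNReal.tendsto_ofReal (Tendsto.mul_const _ ?_)
      exact (((tendsto_const_nhds.sub hl).div_const ε).abs).rpow_const
        (Or.inr (by linarith [hx.1]))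
    refine hle.trans ((lintegral_liminf_le' fun j => aemeasurable_integrand hqm hkm
      (((hu n).sub (hu (φ j))).div_const ε)).trans ?_)
    refine liminf_le_of_frequently_le' (Eventually.frequently ?_)
    filter_upwards [hφ.eventually_ge_atTop M] with j hj
    exact wMod_div_le_one hk hq
      (wMod_sub_lt_top hk hq hqm hkm (hu n) (hfin n) (hfin _)) (hM n hn _ hj)
  constructor
  · obtain ⟨M, hM⟩ := key 1 one_pos
    have h1 : wMod μ q k (fun x => u M x - v x) < ⊤ := by
      have := hM M le_rfl
      simp only [div_one] at this
      exact this.trans_lt ENNReal.one_lt_top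
    have := wMod_sub_lt_top hk hq hqm hkm (hu M) (hfin M) h1
    simpa using this
  · rw [Metric.tendsto_atTop]
    intro ε hε
    obtain ⟨M, hM⟩ := key (ε / 2) (by positivity)
    refine ⟨M, fun n hn => ?_⟩
    rw [Real.dist_eq, sub_zero, abs_of_nonneg wLux_nonneg]
    linarith [wLux_le (by positivity) (hM n hn)]

/-- On a finite measure space, a Cauchy sequence for the unweighted gauge is Cauchy in `L¹`, so it
has a subsequence converging almost everywhere. -/
lemma exists_subseq_ae_tendsto [IsFiniteMeasure μ] (hq : ∀ᵐ x ∂μ, 1 ≤ q x ∧ q x ≤ Q)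
    (hqm : AEMeasurable q μ) {u : ℕ → X → ℝ}
    (hu : ∀ n, AEMeasurable (u n) μ) (hfin : ∀ n, wMod μ q (fun _ => 1) (u n) < ⊤)
    (hcau : ∀ ε > (0 : ℝ), ∃ M : ℕ, ∀ n ≥ M, ∀ m ≥ M,
      wLux μ q (fun _ => 1) (fun x => u n x - u m x) < ε) :
    ∃ φ : ℕ → ℕ, Tendsto φ atTop atTop ∧ ∃ v : X → ℝ, Measurable v ∧
      ∀ᵐ x ∂μ, Tendsto (fun j => u (φ j) x) atTop (𝓝 (v x)) := by
  have hL1 : ∀ ε > (0 : ℝ), ∃ M : ℕ, ∀ n ≥ M, ∀ m ≥ M,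
      eLpNorm (u n - u m) 1 μ ≤ ENNReal.ofReal ε * (μ Set.univ + 1) := by
    intro ε hε
    obtain ⟨M, hM⟩ := hcau ε hε
    refine ⟨M, fun n hn m hm => ?_⟩
    have h1 := wMod_div_le_one (fun _ => zero_le_one) hq
      (wMod_sub_lt_top (fun _ => zero_le_one) hq hqm aemeasurable_const (hu n) (hfin n) (hfin m))
      (hM n hn m hm)
    rw [eLpNorm_one_eq_lintegral_enorm]
    have h2 : ∫⁻ x, ‖(u n - u m) x‖ₑ ∂μ ≤ ∫⁻ x, ENNReal.ofReal ε *
        (1 + ENNReal.ofReal (|(u n x - u m x) / ε| ^ q x * 1)) ∂μ := by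
      refine lintegral_mono_ae ?_
      filter_upwards [hq] with x hx
      have h1 : (0 : ℝ) ≤ q x := by linarith [hx.1]
      set t := |(u n x - u m x) / ε| with ht
      have ht0 : 0 ≤ t := abs_nonneg _
      have e : |u n x - u m x| = ε * t := by
        rw [ht, abs_div, abs_of_pos hε]; field_simp
      have hle : t ≤ 1 + t ^ q x := by
        rcases le_total t 1 with h | h
        · linarith [Real.rpow_nonneg ht0 (q x)]
        · linarith [Real.self_le_rpow_of_one_le h hx.1]
      rw [Real.enorm_eq_ofReal_abs, Pi.sub_apply, e, ← ENNReal.ofReal_one,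
        ← ENNReal.ofReal_add zero_le_one (by positivity), ← ENNReal.ofReal_mul hε.le, mul_one]
      gcongr
    refine h2.trans ?_
    rw [lintegral_const_mul' _ _ ENNReal.ofReal_ne_top, lintegral_add_left measurable_const,
      lintegral_one]
    gcongr
    exact h1
  choose M hM using fun j : ℕ => hL1 ((1 / 2) ^ j) (by positivity)
  obtain ⟨φ, hφ, hφM⟩ : ∃ φ : ℕ → ℕ, StrictMono φ ∧ ∀ j, M j ≤ φ j :=
    extraction_forall_of_eventually' fun j => ⟨M j, fun n hn => hn⟩
  refine ⟨φ, hφ.tendsto_atTop, ?_⟩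
  -- the summable bounds below must be strict, whence the `2` in place of `1`
  have hae : ∀ᵐ x ∂μ, ∃ l, Tendsto (fun j => u (φ j) x) atTop (𝓝 l) := by
    refine MeasureTheory.Lp.ae_tendsto_of_cauchy_eLpNorm (p := 1)
      (B := fun j => ENNReal.ofReal ((1 / 2) ^ j) * (μ Set.univ + 2))
      (f := fun j => u (φ j)) (fun j => (hu _).aestronglyMeasurable) le_rfl ?_ ?_
    · rw [ENNReal.tsum_mul_right, ← ENNReal.ofReal_tsum_of_nonneg (fun _ => by positivity)
        summable_geometric_two]
      exact ENNReal.mul_ne_top ENNReal.ofReal_ne_top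
        (ENNReal.add_ne_top.2 ⟨measure_ne_top _ _, ENNReal.ofNat_ne_top⟩)
    · intro j n m hn hm
      refine (hM j _ ((hφM j).trans (hφ.monotone hn)) _
        ((hφM j).trans (hφ.monotone hm))).trans_lt ?_
      refine (ENNReal.mul_lt_mul_iff_right (by simp) ENNReal.ofReal_ne_top).2 ?_
      exact (ENNReal.add_lt_add_iff_left (measure_ne_top _ _)).2 ENNReal.one_lt_two
  obtain ⟨v, hv, hlim⟩ := measurable_limit_of_tendsto_metrizable_ae (fun j => hu (φ j)) hae
  exact ⟨v, hv, hlim⟩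

end Modular

/-! ### The Lebesgue and Gagliardo terms as weighted gauges -/

/-- The weight `|x - y|^{-(s p + N)}` of the Gagliardo modular; it vanishes on the diagonal
by the conventions for `0 ^ r` and `0⁻¹` (when `s p + N ≠ 0`). -/
def gagWeight {N : ℕ} (s : ℝ) (p : Euc N × Euc N → ℝ) (z : Euc N × Euc N) : ℝ :=
  (‖z.1 - z.2‖ ^ (s * p z + N))⁻¹

lemma gag_integral_eq {N : ℕ} (S : Set (Euc N × Euc N)) (s : ℝ) (p : Euc N × Euc N → ℝ)
    (w : Euc N → ℝ) {ν : ℝ} (hν : 0 < ν) :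
    (∫⁻ z in S, ENNReal.ofReal
      (|w z.1 - w z.2| ^ p z / (ν ^ p z * ‖z.1 - z.2‖ ^ (s * p z + N)))) =
    wMod (volume.restrict S) p (gagWeight s p) (fun z => (w z.1 - w z.2) / ν) := by
  refine lintegral_congr fun z => ?_
  rw [abs_div, abs_of_pos hν, Real.div_rpow (abs_nonneg _) hν.le, gagWeight, ← div_eq_mul_inv,
    div_div]

lemma gagSemi_eq {N : ℕ} (S : Set (Euc N × Euc N)) (s : ℝ) (p : Euc N × Euc N → ℝ)
    (w : Euc N → ℝ) : gagSemi S s p w =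
      wLux (volume.restrict S) p (gagWeight s p) (fun z => w z.1 - w z.2) := by
  unfold gagSemi wLux
  congr 1
  ext ν
  exact and_congr_right fun hν => by rw [gag_integral_eq S s p w hν]

lemma luxNorm_eq {N : ℕ} (Ω : Set (Euc N)) (q w : Euc N → ℝ) :
    luxNorm Ω q w = wLux (volume.restrict Ω) q (fun _ => 1) w := by
  simp [luxNorm, wLux, wMod]

/-- completeness of the space `W`. -/
theorem W_complete
    {N : ℕ} (hN : 2 ≤ N) (Ω : Set (Euc N)) (hΩo : IsOpen Ω)
    (hΩb : Bornology.IsBounded Ω) (s : ℝ) (hs : s ∈ Set.Ioo (0:ℝ) 1)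
    (p : Fin N → Euc N × Euc N → ℝ)
    (hp_cont : ∀ i, ContinuousOn (p i) (closure Ω ×ˢ closure Ω))
    (hp_symm : ∀ i, ∀ x ∈ closure Ω, ∀ y ∈ closure Ω, p i (x, y) = p i (y, x))
    (hp_bounds : ∀ i, ∃ pm pp : ℝ, 1 < pm ∧
      ∀ z ∈ closure Ω ×ˢ closure Ω, pm ≤ p i z ∧ p i z ≤ pp)
    (pM : Euc N → ℝ) (hpM : ∀ x, pM x = ⨆ i, p i (x, x)) :
    ∀ w : ℕ → Euc N → ℝ, (∀ n, memW Ω (Ω ×ˢ Ω) s p pM (w n)) →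
      (∀ ε > (0:ℝ), ∃ M : ℕ, ∀ n ≥ M, ∀ m ≥ M,
        WNorm Ω (Ω ×ˢ Ω) s p pM (fun x => w n x - w m x) < ε) →
      ∃ v : Euc N → ℝ, memW Ω (Ω ×ˢ Ω) s p pM v ∧
        Tendsto (fun n => WNorm Ω (Ω ×ˢ Ω) s p pM (fun x => w n x - v x)) atTop (𝓝 0) := by
  intro w hw hcau
  have hΩm : MeasurableSet Ω := hΩo.measurableSet
  have hSm : MeasurableSet (Ω ×ˢ Ω) := hΩm.prod hΩm
  have hne : Nonempty (Fin N) := ⟨⟨0, by omega⟩⟩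
  have : IsFiniteMeasure (volume.restrict Ω) :=
    ⟨by rw [Measure.restrict_apply_univ]; exact hΩb.measure_lt_top⟩
  choose pm pp hpm hpb using hp_bounds
  have hsub : ∀ z ∈ Ω ×ˢ Ω, z ∈ closure Ω ×ˢ closure Ω :=
    fun z hz => ⟨subset_closure hz.1, subset_closure hz.2⟩
  have hqi : ∀ i, ∀ᵐ z ∂(volume.restrict (Ω ×ˢ Ω)), 1 ≤ p i z ∧ p i z ≤ pp i := by
    intro i
    filter_upwards [ae_restrict_mem hSm] with z hz
    have := hpb i z (hsub z hz)
    exact ⟨(hpm i).le.trans this.1, this.2⟩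
  have hqM : ∀ᵐ x ∂(volume.restrict Ω), 1 ≤ pM x ∧ pM x ≤ ⨆ i, pp i := by
    filter_upwards [ae_restrict_mem hΩm] with x hx
    have hb := fun i => hpb i (x, x) (hsub _ ⟨hx, hx⟩)
    rw [hpM]
    constructor
    · obtain ⟨i⟩ := hne
      exact ((hpm i).le.trans (hb i).1).trans
        (le_ciSup (f := fun i => p i (x, x)) (Set.finite_range _).bddAbove i)
    · exact ciSup_mono (Set.finite_range _).bddAbove fun i => (hb i).2
  have hpim : ∀ i, AEMeasurable (p i) (volume.restrict (Ω ×ˢ Ω)) := fun i =>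
    ((hp_cont i).mono hsub).aemeasurable hSm
  have hpMm : AEMeasurable pM (volume.restrict Ω) := by
    have e : pM = fun x => ⨆ i, p i (x, x) := funext hpM
    rw [e]
    refine AEMeasurable.iSup fun i => ContinuousOn.aemeasurable ?_ hΩm
    exact (hp_cont i).comp (by fun_prop) fun x hx => hsub _ ⟨hx, hx⟩
  have hkm : ∀ i, AEMeasurable (gagWeight s (p i)) (volume.restrict (Ω ×ˢ Ω)) := by
    intro i
    have h1 : AEMeasurable (fun z : Euc N × Euc N => ‖z.1 - z.2‖) (volume.restrict (Ω ×ˢ Ω)) :=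
      (by fun_prop : Continuous fun z : Euc N × Euc N => ‖z.1 - z.2‖).measurable.aemeasurable
    exact (h1.pow (((hpim i).const_mul s).add_const _)).inv
  have hk : ∀ i z, 0 ≤ gagWeight s (p i) z := fun i z =>
    inv_nonneg.2 (Real.rpow_nonneg (norm_nonneg _) _)
  -- the norm splits into nonnegative gauges, so the sequence is Cauchy for each of them
  have hgn : ∀ i f, 0 ≤ gagSemi (Ω ×ˢ Ω) s (p i) f := fun i f => by
    rw [gagSemi_eq]; exact wLux_nonneg
  have hln : ∀ f, 0 ≤ luxNorm Ω pM f := fun f => by rw [luxNorm_eq]; exact wLux_nonneg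
  have hle_l : ∀ f, luxNorm Ω pM f ≤ WNorm Ω (Ω ×ˢ Ω) s p pM f := fun f =>
    le_add_of_nonneg_left (Finset.sum_nonneg fun i _ => hgn i f)
  have hle_g : ∀ i f, gagSemi (Ω ×ˢ Ω) s (p i) f ≤ WNorm Ω (Ω ×ˢ Ω) s p pM f := fun i f =>
    (Finset.single_le_sum (f := fun i => gagSemi (Ω ×ˢ Ω) s (p i) f)
      (fun i _ => hgn i f) (Finset.mem_univ i)).trans (le_add_of_nonneg_right (hln f))
  have hcau_l : ∀ ε > (0 : ℝ), ∃ M : ℕ, ∀ n ≥ M, ∀ m ≥ M,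
      wLux (volume.restrict Ω) pM (fun _ => 1) (fun x => w n x - w m x) < ε := by
    intro ε hε
    obtain ⟨M, hM⟩ := hcau ε hε
    refine ⟨M, fun n hn m hm => ?_⟩
    rw [← luxNorm_eq]
    exact (hle_l _).trans_lt (hM n hn m hm)
  have hcau_g : ∀ i, ∀ ε > (0 : ℝ), ∃ M : ℕ, ∀ n ≥ M, ∀ m ≥ M,
      wLux (volume.restrict (Ω ×ˢ Ω)) (p i) (gagWeight s (p i))
        (fun z => (w n z.1 - w n z.2) - (w m z.1 - w m z.2)) < ε := by
    intro i ε hε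
    obtain ⟨M, hM⟩ := hcau ε hε
    refine ⟨M, fun n hn m hm => ?_⟩
    have := (hle_g i _).trans_lt (hM n hn m hm)
    rw [gagSemi_eq] at this
    simpa only [sub_sub_sub_comm] using this
  have hfin_l : ∀ n, wMod (volume.restrict Ω) pM (fun _ => 1) (w n) < ⊤ := fun n => by
    simpa [wMod] using (hw n).2.1
  have hfin_g : ∀ i n, wMod (volume.restrict (Ω ×ˢ Ω)) (p i) (gagWeight s (p i))
      (fun z => w n z.1 - w n z.2) < ⊤ := by
    intro i n
    obtain ⟨ν, hν, h⟩ := (hw n).2.2 i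
    rw [gag_integral_eq _ _ _ _ hν] at h
    have := wMod_scale_lt_top (hk i) (hqi i) ν h
    simpa only [mul_div_cancel₀ _ hν.ne'] using this
  have hwm : ∀ n, Measurable (w n) := fun n => (hw n).1
  obtain ⟨φ, hφ, v, hv, hlim⟩ := exists_subseq_ae_tendsto hqM hpMm
    (fun n => (hwm n).aemeasurable) hfin_l hcau_l
  have hlim2 : ∀ᵐ z ∂(volume.restrict (Ω ×ˢ Ω)),
      Tendsto (fun j => w (φ j) z.1 - w (φ j) z.2) atTop (𝓝 (v z.1 - v z.2)) := by
    rw [Measure.volume_eq_prod, ← Measure.prod_restrict]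
    filter_upwards [Measure.quasiMeasurePreserving_fst.ae hlim,
      Measure.quasiMeasurePreserving_snd.ae hlim] with z h1 h2
    exact h1.sub h2
  obtain ⟨hv_l, ht_l⟩ := complete_of_ae_tendsto (fun _ => zero_le_one) hqM hpMm
    aemeasurable_const (fun n => (hwm n).aemeasurable) hfin_l hcau_l hφ hlim
  have hg := fun i => complete_of_ae_tendsto (u := fun n z => w n z.1 - w n z.2)
    (v := fun z => v z.1 - v z.2) (hk i) (hqi i) (hpim i) (hkm i)
    (fun n => (((hwm n).comp measurable_fst).sub
      ((hwm n).comp measurable_snd)).aemeasurable) (hfin_g i) (hcau_g i) hφ hlim2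
  refine ⟨v, ⟨hv, by simpa [wMod] using hv_l, fun i => ⟨1, one_pos, ?_⟩⟩, ?_⟩
  · rw [gag_integral_eq _ _ _ _ one_pos]
    simpa only [div_one] using (hg i).1
  · have ht : Tendsto (fun n => (∑ i, gagSemi (Ω ×ˢ Ω) s (p i) (fun x => w n x - v x)) +
        luxNorm Ω pM (fun x => w n x - v x)) atTop (𝓝 ((∑ _i : Fin N, (0 : ℝ)) + 0)) := by
      refine Tendsto.add (tendsto_finsetSum _ fun i _ => ?_) ?_
      · simp only [gagSemi_eq]
        simpa only [sub_sub_sub_comm] using (hg i).2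
      · simpa only [luxNorm_eq] using ht_l
    simpa [WNorm, WSeminorm] using ht
end
end

section
/- Mountain-pass geometry away from the origin: assume s·pᵢ(x,y) < N for all i and all (x,y) ∈ Q̄. There exists λ* > 0 such that for every λ ∈ (0, λ*) there exist δ > 0 and ϑ > 0 with J_λ(w) ≥ ϑ for every w ∈ X₀ with [w]_{s,p⃗(x,y)}(Q) = δ. -/
/-!
The energy contains the term `∫_Ω |w|^{pM} / pM`, and this alone absorbs the concave term: on `Ω`
one has `r < Pm ≤ pM ≤ P`, where `P` bounds all exponents, so `|w|^r ≤ 1 + |w|^{pM}` and, for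
`lam ≤ 1 / P`, the two integrals over `Ω` contribute at least `-lam * |Ω|` to the energy
(`lam_mul_integral_le`). No embedding theorem is needed.

On the other hand, if the seminorm equals `2 * N`, then one of its `N` summands exceeds `1`. So
`ν = 1` is not admissible in the infimum defining that summand, its modular exceeds `1`, and the
Gagliardo part of the energy is at least `1 / P` (`one_div_le_integral_gag`). Since `|Ω| < ∞`, every
`lam < 1 / (2 * P * (|Ω| + 1))` leaves the energy at least `1 / (2 * P)` on the sphere of radius
`δ = 2 * N`.
-/

open MeasureTheory ENNReal Filter Topology

noncomputable section

/-- Membership in `X₀`: member of `X` vanishing a.e. outside `Ω`. -/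
def memX0 {N : ℕ} (Ω : Set (Euc N)) (Q : Set (Euc N × Euc N)) (s : ℝ)
    (p : Fin N → Euc N × Euc N → ℝ) (pM : Euc N → ℝ) (w : Euc N → ℝ) : Prop :=
  memW Ω Q s p pM w ∧ ∀ᵐ x : Euc N, x ∉ Ω → w x = 0

/-- The energy functional `J_λ` associated to the anisotropic nonlocal problem. -/
def Jfun {N : ℕ} (Ω : Set (Euc N)) (Q : Set (Euc N × Euc N)) (s : ℝ)
    (p : Fin N → Euc N × Euc N → ℝ) (pM r : Euc N → ℝ) (lam : ℝ)
    (w : Euc N → ℝ) : ℝ :=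
  (∑ i, ∫ z in Q, |w z.1 - w z.2| ^ p i z / ‖z.1 - z.2‖ ^ (s * p i z + N) / p i z) +
    (∫ x in Ω, |w x| ^ pM x / pM x) - lam * ∫ x in Ω, |w x| ^ r x / r x

/-- The Gateaux derivative pairing `⟨J'_λ(w), φ⟩`. -/
def Jderiv {N : ℕ} (Ω : Set (Euc N)) (Q : Set (Euc N × Euc N)) (s : ℝ)
    (p : Fin N → Euc N × Euc N → ℝ) (pM r : Euc N → ℝ) (lam : ℝ)
    (w φ : Euc N → ℝ) : ℝ :=
  (∑ i, ∫ z in Q, |w z.1 - w z.2| ^ (p i z - 2) * (w z.1 - w z.2) *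
      (φ z.1 - φ z.2) / ‖z.1 - z.2‖ ^ (s * p i z + N)) +
    (∫ x in Ω, |w x| ^ (pM x - 2) * w x * φ x) -
    lam * ∫ x in Ω, |w x| ^ (r x - 2) * w x * φ x

theorem aemeasurable_gag {N : ℕ} {Q : Set (Euc N × Euc N)} (hQ : MeasurableSet Q) (s : ℝ)
    {p : Euc N × Euc N → ℝ} (hp : ContinuousOn p Q) {w : Euc N → ℝ} (hw : Measurable w) :
    AEMeasurable (fun z : Euc N × Euc N =>
      |w z.1 - w z.2| ^ p z / ‖z.1 - z.2‖ ^ (s * p z + N)) (volume.restrict Q) := by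
  have hpm : AEMeasurable p (volume.restrict Q) := hp.aemeasurable hQ
  have h1 : Measurable fun z : Euc N × Euc N => |w z.1 - w z.2| := by
    have := (hw.comp measurable_fst).sub (hw.comp (measurable_snd (α := Euc N) (β := Euc N)))
    exact this.abs
  have h2 : Measurable fun z : Euc N × Euc N => ‖z.1 - z.2‖ :=
    (measurable_fst.sub measurable_snd).norm
  exact (h1.aemeasurable.pow hpm).div (h2.aemeasurable.pow ((hpm.const_mul s).add_const _))

/-- Bounded exponents make the Gagliardo modular finite as soon as it is finite after some
rescaling by `ν`. -/
theorem gagModular_lt_top {N : ℕ} {Q : Set (Euc N × Euc N)} (hQ : MeasurableSet Q) (s : ℝ)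
    {p : Euc N × Euc N → ℝ} {P : ℝ} (hp : ∀ z ∈ Q, 0 < p z ∧ p z ≤ P) {w : Euc N → ℝ}
    {ν : ℝ} (hν : 0 < ν)
    (h : (∫⁻ z in Q, ENNReal.ofReal
      (|w z.1 - w z.2| ^ p z / (ν ^ p z * ‖z.1 - z.2‖ ^ (s * p z + N)))) < ⊤) :
    gagModular Q s p w < ⊤ := by
  have hle : gagModular Q s p w ≤ ∫⁻ z in Q, ENNReal.ofReal ((max 1 ν) ^ P) * ENNReal.ofReal
      (|w z.1 - w z.2| ^ p z / (ν ^ p z * ‖z.1 - z.2‖ ^ (s * p z + N))) := by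
    refine setLIntegral_mono' hQ fun z hz => ?_
    rw [← ENNReal.ofReal_mul (by positivity)]
    apply ENNReal.ofReal_le_ofReal
    have hνp : 0 < ν ^ p z := Real.rpow_pos_of_pos hν _
    have hK : ν ^ p z ≤ (max 1 ν) ^ P :=
      (Real.rpow_le_rpow hν.le (le_max_right _ _) (hp z hz).1.le).trans
        (Real.rpow_le_rpow_of_exponent_le (le_max_left _ _) (hp z hz).2)
    calc |w z.1 - w z.2| ^ p z / ‖z.1 - z.2‖ ^ (s * p z + N)
        = ν ^ p z * (|w z.1 - w z.2| ^ p z / (ν ^ p z * ‖z.1 - z.2‖ ^ (s * p z + N))) := by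
          rw [← mul_div_assoc, mul_div_mul_left _ _ hνp.ne']
      _ ≤ _ := mul_le_mul_of_nonneg_right hK (by positivity)
  refine hle.trans_lt ?_
  rw [lintegral_const_mul' _ _ ENNReal.ofReal_ne_top]
  exact ENNReal.mul_lt_top ENNReal.ofReal_lt_top h

/-- A Luxemburg-type seminorm larger than `1` forces a modular larger than `1`. -/
theorem one_lt_gagModular {N : ℕ} {Q : Set (Euc N × Euc N)} {s : ℝ}
    {p : Euc N × Euc N → ℝ} {w : Euc N → ℝ} (h : 1 < gagSemi Q s p w) :
    1 < gagModular Q s p w := by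
  by_contra! hle
  refine absurd ?_ (not_le.2 h)
  unfold gagSemi
  refine csInf_le ⟨0, fun ν hν => hν.1.le⟩ ⟨one_pos, ?_⟩
  simpa only [gagModular, Real.one_rpow, one_mul] using hle

theorem one_div_le_integral_gag {N : ℕ} {Q : Set (Euc N × Euc N)} (hQ : MeasurableSet Q) {s : ℝ}
    {p : Euc N × Euc N → ℝ} (hpc : ContinuousOn p Q) {P : ℝ}
    (hp : ∀ z ∈ Q, 1 < p z ∧ p z ≤ P) (hP : 0 < P) {w : Euc N → ℝ} (hw : Measurable w)
    (hfin : gagModular Q s p w < ⊤) (h1 : 1 < gagModular Q s p w) :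
    1 / P ≤ ∫ z in Q, |w z.1 - w z.2| ^ p z / ‖z.1 - z.2‖ ^ (s * p z + N) / p z := by
  set f : Euc N × Euc N → ℝ :=
    fun z => |w z.1 - w z.2| ^ p z / ‖z.1 - z.2‖ ^ (s * p z + N) with hf
  have hf0 : ∀ z, 0 ≤ f z := fun z => by positivity
  have hfm : AEMeasurable f (volume.restrict Q) := aemeasurable_gag hQ s hpc hw
  have hfi : IntegrableOn f Q := by
    refine ⟨hfm.aestronglyMeasurable, ?_⟩
    rw [hasFiniteIntegral_iff_ofReal (ae_of_all _ hf0)]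
    exact hfin
  have hmod : 1 ≤ ∫ z in Q, f z := by
    rw [integral_eq_lintegral_of_nonneg_ae (ae_of_all _ hf0) hfm.aestronglyMeasurable]
    have := (ENNReal.toReal_lt_toReal ENNReal.one_ne_top hfin.ne).2 h1
    rw [ENNReal.toReal_one] at this
    exact this.le
  have hgi : IntegrableOn (fun z => f z / p z) Q := by
    refine Integrable.mono' hfi (hfm.div (hpc.aemeasurable hQ)).aestronglyMeasurable ?_
    filter_upwards [ae_restrict_mem hQ] with z hz
    have h1p := (hp z hz).1
    rw [Real.norm_of_nonneg (div_nonneg (hf0 z) (by linarith))]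
    exact div_le_self (hf0 z) h1p.le
  calc 1 / P ≤ (∫ z in Q, f z) / P := by gcongr
    _ = ∫ z in Q, f z / P := (integral_div _ _).symm
    _ ≤ ∫ z in Q, f z / p z := by
      refine setIntegral_mono_on (hfi.div_const P) hgi hQ fun z hz => ?_
      have h1p := (hp z hz).1
      exact div_le_div_of_nonneg_left (hf0 z) (by linarith) (hp z hz).2

/-- The concave term is absorbed by the `pM`-term, up to the measure of `Ω`. -/
theorem lam_mul_integral_le {N : ℕ} {Ω : Set (Euc N)} (hΩ : MeasurableSet Ω)
    (hΩfin : volume Ω ≠ ⊤) {pM r : Euc N → ℝ} (hpM : ContinuousOn pM Ω) {P : ℝ}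
    (hpr : ∀ x ∈ Ω, 1 < r x ∧ r x < pM x ∧ pM x ≤ P) {w : Euc N → ℝ} (hw : Measurable w)
    (hfin : (∫⁻ x in Ω, ENNReal.ofReal (|w x| ^ pM x)) < ⊤) {lam : ℝ} (h0 : 0 < lam)
    (hlam : lam ≤ 1 / P) :
    lam * ∫ x in Ω, |w x| ^ r x / r x ≤
      lam * volume.real Ω + ∫ x in Ω, |w x| ^ pM x / pM x := by
  have hpMm : AEMeasurable pM (volume.restrict Ω) := hpM.aemeasurable hΩ
  have hm : AEMeasurable (fun x => |w x| ^ pM x) (volume.restrict Ω) := hw.abs.aemeasurable.pow hpMm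
  have hi : IntegrableOn (fun x => |w x| ^ pM x) Ω := by
    refine ⟨hm.aestronglyMeasurable, ?_⟩
    rw [hasFiniteIntegral_iff_ofReal (ae_of_all _ fun x => by positivity)]
    exact hfin
  have hgi : IntegrableOn (fun x => |w x| ^ pM x / pM x) Ω := by
    refine Integrable.mono' hi (hm.div hpMm).aestronglyMeasurable ?_
    filter_upwards [ae_restrict_mem hΩ] with x hx
    obtain ⟨h1, h2, -⟩ := hpr x hx
    rw [Real.norm_of_nonneg (div_nonneg (by positivity) (by linarith))]
    exact div_le_self (by positivity) (by linarith)
  have hci : IntegrableOn (fun _ : Euc N => lam) Ω := integrableOn_const hΩfin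
  have hsum : lam * volume.real Ω + ∫ x in Ω, |w x| ^ pM x / pM x =
      ∫ x in Ω, (lam + |w x| ^ pM x / pM x) := by
    rw [integral_add hci hgi, setIntegral_const, smul_eq_mul, mul_comm]
  rw [hsum, ← integral_const_mul]
  -- Only the dominating function has to be integrable, so no measurability of `r` is used.
  refine integral_mono_of_nonneg ?_ (hci.add hgi) ?_
  · filter_upwards [ae_restrict_mem hΩ] with x hx
    have := (hpr x hx).1
    exact mul_nonneg h0.le (div_nonneg (by positivity) (by linarith))
  · filter_upwards [ae_restrict_mem hΩ] with x hx
    obtain ⟨h1, h2, h3⟩ := hpr x hx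
    have hpow : |w x| ^ r x ≤ 1 + |w x| ^ pM x := by
      have ha : 0 ≤ |w x| ^ pM x := by positivity
      rcases le_total |w x| 1 with h | h
      · linarith [Real.rpow_le_one (abs_nonneg (w x)) h (by linarith : 0 ≤ r x)]
      · linarith [Real.rpow_le_rpow_of_exponent_le h h2.le]
    have hl : lam ≤ 1 / pM x :=
      hlam.trans (one_div_le_one_div_of_le (by linarith) h3)
    calc lam * (|w x| ^ r x / r x) ≤ lam * |w x| ^ r x := by
          gcongr
          exact div_le_self (by positivity) h1.le
      _ ≤ lam * (1 + |w x| ^ pM x) := by gcongr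
      _ = lam + lam * |w x| ^ pM x := by ring
      _ ≤ lam + 1 / pM x * |w x| ^ pM x := by gcongr
      _ = lam + |w x| ^ pM x / pM x := by ring

/-- mountain-pass geometry of `J_λ` away from the origin. -/
theorem mountain_pass_geometry
    {N : ℕ} (hN : 2 ≤ N) (Ω : Set (Euc N)) (hΩo : IsOpen Ω)
    (hΩb : Bornology.IsBounded Ω) (s : ℝ) (hs : s ∈ Set.Ioo (0:ℝ) 1)
    (Q : Set (Euc N × Euc N)) (hQ : Q = (Ωᶜ ×ˢ Ωᶜ)ᶜ)
    (p : Fin N → Euc N × Euc N → ℝ)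
    (hp_cont : ∀ i, ContinuousOn (p i) (closure Q))
    (hp_symm : ∀ i, ∀ z ∈ closure Q, p i z = p i (z.2, z.1))
    (hp_bounds : ∀ i, ∃ pm pp : ℝ, 1 < pm ∧
      ∀ z ∈ closure Q, pm ≤ p i z ∧ p i z ≤ pp)
    (pM : Euc N → ℝ) (hpM : ∀ x, pM x = ⨆ i, p i (x, x))
    (Pm : ℝ) (hPm : IsGLB {y : ℝ | ∃ i : Fin N, ∃ z ∈ closure Q, p i z = y} Pm)
    (r : Euc N → ℝ) (hr_cont : ContinuousOn r (closure Ω))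
    (hr : ∀ x ∈ closure Ω, 1 < r x ∧ r x < Pm)
    (hsp : ∀ i, ∀ z ∈ closure Q, s * p i z < N) :
    ∃ lamStar > (0:ℝ), ∀ lam ∈ Set.Ioo (0:ℝ) lamStar,
      ∃ δ > (0:ℝ), ∃ ϑ > (0:ℝ), ∀ w : Euc N → ℝ, memX0 Ω Q s p pM w →
        WSeminorm Q s p w = δ → ϑ ≤ Jfun Ω Q s p pM r lam w := by
  have hQo : IsOpen Q := by
    rw [hQ]
    exact (hΩo.isClosed_compl.prod hΩo.isClosed_compl).isOpen_compl
  have hsub : Q ⊆ closure Q := subset_closure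
  have hQm : MeasurableSet Q := hQo.measurableSet
  have hdiag : ∀ x ∈ Ω, (x, x) ∈ Q := fun x hx => by
    rw [hQ]
    exact fun h => h.1 hx
  have hNpos : 0 < N := by omega
  have : Nonempty (Fin N) := ⟨⟨0, hNpos⟩⟩
  have hΩfin : volume Ω ≠ ⊤ := hΩb.measure_lt_top.ne
  choose pm pp hpm hpp using hp_bounds
  set P : ℝ := 1 + ∑ i, |pp i| with hPdef
  have hP1 : 1 ≤ P := by
    have : 0 ≤ ∑ i, |pp i| := Finset.sum_nonneg fun i _ => abs_nonneg _
    linarith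
  have hP0 : 0 < P := by linarith
  have hpP : ∀ i, ∀ z ∈ Q, 1 < p i z ∧ p i z ≤ P := fun i z hz => by
    have h := hpp i z (hsub hz)
    have h1 : |pp i| ≤ ∑ j, |pp j| :=
      Finset.single_le_sum (f := fun j => |pp j|) (fun j _ => abs_nonneg _) (Finset.mem_univ i)
    exact ⟨(hpm i).trans_le h.1, by linarith [h.2, le_abs_self (pp i)]⟩
  have hpM_cont : ContinuousOn pM Ω := by
    have hpc : ∀ i ∈ Finset.univ, ContinuousOn (fun x => p i (x, x)) Ω := fun i _ =>
      (hp_cont i).comp (by fun_prop) fun x hx => hsub (hdiag x hx)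
    refine (ContinuousOn.finset_sup'_apply Finset.univ_nonempty hpc).congr fun x _ => ?_
    exact (hpM x).trans (Finset.sup'_univ_eq_ciSup fun i => p i (x, x)).symm
  have hpr : ∀ x ∈ Ω, 1 < r x ∧ r x < pM x ∧ pM x ≤ P := fun x hx => by
    have hrx := hr x (subset_closure hx)
    refine ⟨hrx.1, hrx.2.trans_le ?_, ?_⟩
    · rw [hpM]
      let i : Fin N := ⟨0, hNpos⟩
      exact (hPm.1 ⟨i, (x, x), hsub (hdiag x hx), rfl⟩).trans
        (le_ciSup (f := fun i => p i (x, x)) (Set.finite_range _).bddAbove i)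
    · rw [hpM]
      exact ciSup_le fun i => (hpP i _ (hdiag x hx)).2
  set V : ℝ := volume.real Ω with hV
  have hV0 : 0 ≤ V := measureReal_nonneg
  refine ⟨1 / (2 * P * (V + 1)), by positivity, fun lam hlam => ?_⟩
  obtain ⟨hlam0, hlam1⟩ := hlam
  refine ⟨2 * N, by positivity, 1 / (2 * P), by positivity, fun w hw hδ => ?_⟩
  obtain ⟨⟨hwm, hwM, hwQ⟩, -⟩ := hw
  -- The seminorm is a sum of `N` terms with value `2 * N`, so one of them exceeds `1`.
  obtain ⟨i, hi⟩ : ∃ i, 1 < gagSemi Q s (p i) w := by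
    by_contra! hle
    have hsum : WSeminorm Q s p w ≤ ∑ _i : Fin N, (1 : ℝ) := Finset.sum_le_sum fun i _ => hle i
    rw [hδ] at hsum
    have : (0 : ℝ) < N := by exact_mod_cast hNpos
    simp at hsum
    linarith
  obtain ⟨ν, hν, hνfin⟩ := hwQ i
  have hfin : gagModular Q s (p i) w < ⊤ :=
    gagModular_lt_top hQm s (fun z hz => ⟨by linarith [(hpP i z hz).1], (hpP i z hz).2⟩) hν hνfin
  have hgag : 1 / P ≤ ∑ i, ∫ z in Q,
      |w z.1 - w z.2| ^ p i z / ‖z.1 - z.2‖ ^ (s * p i z + N) / p i z := by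
    refine (one_div_le_integral_gag hQm ((hp_cont i).mono hsub) (hpP i) hP0 hwm hfin
      (one_lt_gagModular hi)).trans ?_
    refine Finset.single_le_sum (f := fun i => ∫ z in Q,
      |w z.1 - w z.2| ^ p i z / ‖z.1 - z.2‖ ^ (s * p i z + N) / p i z)
      (fun j _ => ?_) (Finset.mem_univ i)
    refine setIntegral_nonneg hQm fun z hz => ?_
    have := (hpP j z hz).1
    exact div_nonneg (by positivity) (by linarith)
  have hlamV : lam * (V + 1) ≤ 1 / (2 * P) := by
    have h := mul_le_mul_of_nonneg_right hlam1.le (by linarith : 0 ≤ V + 1)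
    calc _ ≤ _ := h
      _ = 1 / (2 * P) := by field_simp
  have hhalf : 1 / P = 1 / (2 * P) + 1 / (2 * P) := by field_simp; norm_num
  have hpos : 0 < 1 / (2 * P) := by positivity
  have hlamP : lam ≤ 1 / P := by nlinarith [mul_nonneg hlam0.le hV0]
  have hconc := lam_mul_integral_le hΩo.measurableSet hΩfin hpM_cont hpr hwm hwM hlam0 hlamP
  rw [← hV] at hconc
  have hJ : Jfun Ω Q s p pM r lam w = (∑ i, ∫ z in Q,
      |w z.1 - w z.2| ^ p i z / ‖z.1 - z.2‖ ^ (s * p i z + N) / p i z) +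
    (∫ x in Ω, |w x| ^ pM x / pM x) - lam * ∫ x in Ω, |w x| ^ r x / r x := rfl
  rw [hJ]
  nlinarith
end
end

section
/- Negativity of the energy along a ray: for every λ > 0 there exists ω ∈ X₀ with ω ≥ 0 a.e., ω not a.e. equal to 0, and t₀ > 0 such that J_λ(t·ω) < 0 for every t ∈ (0, t₀). -/
open MeasureTheory ENNReal Filter Topology

noncomputable section

/-!
The energy along a ray is controlled by comparing exponents. Since `Ω` is bounded, the continuous
exponent `r` attains its maximum `r₀ < Pm` on `closure Ω`. For `0 < t < 1` both "elliptic" terms of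
`J_λ(t ω)` are at most a constant times `t ^ Pm`, because every `p i` and `pM` are `≥ Pm`, whereas
the term subtracted is at least a positive constant times `t ^ r₀`. As `r₀ < Pm`, the latter wins
for small `t`.

The direction `ω` is a cone-shaped bump: it is `1`-Lipschitz, takes values in `[0, 1]` and is
supported in a ball inside `Ω`. It has finite Gagliardo energy since
`|ω x - ω y| ^ p / ‖x - y‖ ^ (s p + N)` is at most `radialKer s N ‖x - y‖`, and vanishes unless `x`
or `y` lies in the ball. The kernel `u ↦ radialKer s N ‖u‖` is integrable on `ℝ^N`
(`integrable_radialKer`), so the dominating function is a convolution integrand of two integrable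
functions (`integrable_dom`). An empty `Ω` is ruled out by `hPm`, because the empty set of reals has
no greatest lower bound.
-/

/-! ### The radial majorant of the Gagliardo kernel -/

/-- Radial majorant of the Gagliardo kernel of a `1`-Lipschitz function with oscillation at most
`1`: the profile `d ^ (1 - s - N)` near the diagonal and `d ^ (-s - N)` away from it. -/
def radialKer (s : ℝ) (N : ℕ) (d : ℝ) : ℝ :=
  if d ≤ 1 then d ^ (1 - s - N) else d ^ (-s - N)

lemma radialKer_nonneg (s : ℝ) (N : ℕ) {d : ℝ} (hd : 0 ≤ d) : 0 ≤ radialKer s N d := by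
  unfold radialKer
  split_ifs <;> positivity

lemma integrable_radialKer {N : ℕ} (hN : 2 ≤ N) {s : ℝ} (hs : s ∈ Set.Ioo (0:ℝ) 1) :
    Integrable (fun u : Euc N => radialKer s N ‖u‖) := by
  have : Nonempty (Fin N) := ⟨⟨0, by omega⟩⟩
  have : Nontrivial (Euc N) := by
    apply Module.nontrivial_of_finrank_pos (R := ℝ)
    simp; omega
  rw [integrable_fun_norm_addHaar volume (f := radialKer s N)]
  have hd : Module.finrank ℝ (Euc N) = N := by simp
  rw [hd, ← Set.Ioc_union_Ioi_eq_Ioi (zero_le_one (α := ℝ))]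
  have hc : ((N - 1 : ℕ) : ℝ) = N - 1 := by
    rw [Nat.cast_sub (by omega)]; simp
  refine IntegrableOn.union ?_ ?_
  · have h := (intervalIntegral.intervalIntegrable_rpow' (a := 0) (b := 1) (r := -s)
      (by linarith [hs.2]))
    rw [intervalIntegrable_iff_integrableOn_Ioc_of_le zero_le_one] at h
    refine h.congr_fun (fun y hy => ?_) measurableSet_Ioc
    have hy0 : 0 < y := hy.1
    simp only [radialKer, if_pos hy.2, smul_eq_mul]
    rw [← Real.rpow_natCast, ← Real.rpow_add hy0, hc]
    congr 1; ring
  · have h := integrableOn_Ioi_rpow_of_lt (a := -s - 1) (c := 1) (by linarith [hs.1]) one_pos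
    refine h.congr_fun (fun y hy => ?_) measurableSet_Ioi
    have hy1 : 1 < y := hy
    have hy0 : 0 < y := by linarith
    simp only [radialKer, if_neg (not_le.2 hy1), smul_eq_mul]
    rw [← Real.rpow_natCast, ← Real.rpow_add hy0, hc]
    congr 1; ring

/-- The pointwise Gagliardo bound; at `d = 0` it holds since `0 ^ p = 0`. -/
lemma quotient_le_radialKer {s : ℝ} (hs : s ∈ Set.Ioo (0:ℝ) 1) (N : ℕ) {a d p : ℝ}
    (ha : 0 ≤ a) (ha1 : a ≤ 1) (had : a ≤ d) (hp : 1 < p) :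
    a ^ p / d ^ (s * p + N) ≤ radialKer s N d := by
  have hd : 0 ≤ d := ha.trans had
  obtain ⟨hs0, hs1⟩ := hs
  rcases hd.eq_or_lt with h0 | h0
  · have : a = 0 := le_antisymm (had.trans h0.symm.le) ha
    rw [this, Real.zero_rpow (by linarith), zero_div]
    exact radialKer_nonneg s N hd
  unfold radialKer
  split_ifs with h1
  · calc a ^ p / d ^ (s * p + N) ≤ d ^ p / d ^ (s * p + N) := by gcongr
      _ = d ^ (p - (s * p + N)) := (Real.rpow_sub h0 _ _).symm
      _ ≤ d ^ (1 - s - N) := by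
        apply Real.rpow_le_rpow_of_exponent_ge h0 h1
        nlinarith
  · push Not at h1
    calc a ^ p / d ^ (s * p + N) ≤ 1 / d ^ (s * p + N) := by
          gcongr
          exact Real.rpow_le_one ha ha1 (by linarith)
      _ = d ^ (-(s * p + N)) := by rw [Real.rpow_neg hd, one_div]
      _ ≤ d ^ (-s - N) := by
        apply Real.rpow_le_rpow_of_exponent_le h1.le
        nlinarith

/-- Integrability of the function dominating the Gagliardo density of a function supported in a
ball: pairs with at least one point in the ball are weighted by the radial kernel. -/
lemma integrable_dom {N : ℕ} (hN : 2 ≤ N) {s : ℝ} (hs : s ∈ Set.Ioo (0:ℝ) 1)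
    (x0 : Euc N) (ρ : ℝ) :
    Integrable (fun z : Euc N × Euc N =>
      (Metric.ball x0 ρ).indicator (fun _ => (1:ℝ)) z.1 * radialKer s N ‖z.1 - z.2‖ +
      (Metric.ball x0 ρ).indicator (fun _ => (1:ℝ)) z.2 * radialKer s N ‖z.1 - z.2‖) := by
  have hf : Integrable ((Metric.ball x0 ρ).indicator (fun _ => (1:ℝ))) :=
    (integrable_indicator_iff measurableSet_ball).2
      (integrableOn_const measure_ball_lt_top.ne)
  have h2 := hf.convolution_integrand (ContinuousLinearMap.mul ℝ ℝ)
    (integrable_radialKer hN hs)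
  refine Integrable.add ?_ (h2.congr (Eventually.of_forall fun z => by simp))
  refine h2.swap.congr (Eventually.of_forall fun z => ?_)
  simp [norm_sub_rev]

/-! ### The cone-shaped bump and its Gagliardo energy -/

/-- The cone-shaped bump of height and radius `ρ` centred at `x0`. -/
def cone {N : ℕ} (x0 : Euc N) (ρ : ℝ) (x : Euc N) : ℝ := max 0 (ρ - dist x x0)

lemma cone_continuous {N : ℕ} (x0 : Euc N) (ρ : ℝ) : Continuous (cone x0 ρ) := by
  unfold cone; fun_prop

lemma cone_nonneg {N : ℕ} (x0 : Euc N) (ρ : ℝ) (x : Euc N) : 0 ≤ cone x0 ρ x :=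
  le_max_left _ _

lemma cone_le_one {N : ℕ} (x0 : Euc N) {ρ : ℝ} (hρ : ρ ≤ 1) (x : Euc N) : cone x0 ρ x ≤ 1 :=
  max_le zero_le_one (by linarith [dist_nonneg (x := x) (y := x0)])

lemma cone_eq_zero {N : ℕ} {x0 : Euc N} {ρ : ℝ} {x : Euc N} (hx : x ∉ Metric.ball x0 ρ) :
    cone x0 ρ x = 0 := by
  rw [Metric.mem_ball, not_lt] at hx
  exact max_eq_left (by linarith)

lemma cone_pos {N : ℕ} {x0 : Euc N} {ρ : ℝ} {x : Euc N} (hx : x ∈ Metric.ball x0 ρ) :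
    0 < cone x0 ρ x := by
  rw [Metric.mem_ball] at hx
  exact lt_max_of_lt_right (by linarith)

lemma abs_cone_sub_le {N : ℕ} (x0 : Euc N) (ρ : ℝ) (x y : Euc N) :
    |cone x0 ρ x - cone x0 ρ y| ≤ ‖x - y‖ := by
  unfold cone
  refine (abs_max_sub_max_le_max _ _ _ _).trans ?_
  rw [sub_self, abs_zero, ← dist_eq_norm]
  refine max_le dist_nonneg ?_
  rw [show ρ - dist x x0 - (ρ - dist y x0) = dist y x0 - dist x x0 by ring, dist_comm x y]
  exact abs_dist_sub_le _ _ _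

lemma abs_cone_sub_le_one {N : ℕ} (x0 : Euc N) {ρ : ℝ} (hρ : ρ ≤ 1) (x y : Euc N) :
    |cone x0 ρ x - cone x0 ρ y| ≤ 1 := by
  have h1 := cone_nonneg x0 ρ x
  have h2 := cone_nonneg x0 ρ y
  have h3 := cone_le_one x0 hρ x
  have h4 := cone_le_one x0 hρ y
  rw [abs_le]; constructor <;> linarith

lemma integrableOn_gagliardo_cone {N : ℕ} (hN : 2 ≤ N) {s : ℝ} (hs : s ∈ Set.Ioo (0:ℝ) 1)
    {Q : Set (Euc N × Euc N)} (hQ : MeasurableSet Q) {p : Euc N × Euc N → ℝ}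
    (hp : ContinuousOn p Q) (hp1 : ∀ z ∈ Q, 1 < p z) (x0 : Euc N) {ρ : ℝ} (hρ : ρ ≤ 1) :
    IntegrableOn (fun z : Euc N × Euc N => |cone x0 ρ z.1 - cone x0 ρ z.2| ^ p z /
      ‖z.1 - z.2‖ ^ (s * p z + N)) Q := by
  refine ((integrable_dom hN hs x0 ρ).integrableOn (s := Q)).mono' ?_ ?_
  · have hpm : AEMeasurable p (volume.restrict Q) := hp.aemeasurable hQ
    have hc : Measurable (cone x0 ρ) := (cone_continuous x0 ρ).measurable
    have h1 : AEMeasurable (fun z : Euc N × Euc N => |cone x0 ρ z.1 - cone x0 ρ z.2|)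
        (volume.restrict Q) := by
      have : Continuous (fun z : Euc N × Euc N => |cone x0 ρ z.1 - cone x0 ρ z.2|) := by
        have := cone_continuous x0 ρ
        fun_prop
      exact this.aemeasurable
    have h2 : AEMeasurable (fun z : Euc N × Euc N => ‖z.1 - z.2‖) (volume.restrict Q) := by
      have : Continuous (fun z : Euc N × Euc N => ‖z.1 - z.2‖) := by fun_prop
      exact this.aemeasurable
    exact ((h1.pow hpm).div (h2.pow ((hpm.const_mul s).add_const _))).aestronglyMeasurable
  · refine (ae_restrict_iff' hQ).2 (Eventually.of_forall fun z hz => ?_)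
    rw [Real.norm_of_nonneg (by positivity)]
    have hk := radialKer_nonneg s N (norm_nonneg (z.1 - z.2))
    have hb := quotient_le_radialKer hs N (abs_nonneg _) (abs_cone_sub_le_one x0 hρ z.1 z.2)
      (abs_cone_sub_le x0 ρ z.1 z.2) (hp1 z hz)
    by_cases hz1 : z.1 ∈ Metric.ball x0 ρ <;> by_cases hz2 : z.2 ∈ Metric.ball x0 ρ
    · simp only [Set.indicator_of_mem hz1, Set.indicator_of_mem hz2]; linarith
    · simp only [Set.indicator_of_mem hz1, Set.indicator_of_notMem hz2]; linarith
    · simp only [Set.indicator_of_notMem hz1, Set.indicator_of_mem hz2]; linarith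
    · simp only [Set.indicator_of_notMem hz1, Set.indicator_of_notMem hz2]
      rw [cone_eq_zero hz1, cone_eq_zero hz2, sub_self, abs_zero,
        Real.zero_rpow (by linarith [hp1 z hz])]
      simp

/-! ### Comparison of powers and the energy along the ray -/

/-- Since `a < b`, the power `t ^ a` dominates `t ^ b` near `0`, whatever the constants. -/
lemma exists_small_rpow {a b K c : ℝ} (hab : a < b) (hK : 0 ≤ K) (hc : 0 < c) :
    ∃ t₀ > (0:ℝ), t₀ ≤ 1 ∧ ∀ t ∈ Set.Ioo (0:ℝ) t₀, t ^ b * K < t ^ a * c := by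
  have hq : 0 < c / (K + 1) := by positivity
  refine ⟨min 1 ((c / (K + 1)) ^ (b - a)⁻¹), by positivity, min_le_left _ _, ?_⟩
  rintro t ⟨ht0, ht⟩
  have h1 : t ^ (b - a) < c / (K + 1) := by
    have := Real.rpow_lt_rpow ht0.le (ht.trans_le (min_le_right _ _)) (sub_pos.2 hab)
    rwa [Real.rpow_inv_rpow hq.le (sub_pos.2 hab).ne'] at this
  rw [lt_div_iff₀ (by linarith)] at h1
  have h2 : t ^ b = t ^ a * t ^ (b - a) := by rw [← Real.rpow_add ht0]; congr 1; ring
  have h3 : 0 < t ^ a := by positivity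
  have h4 : 0 < t ^ (b - a) := by positivity
  rw [h2, mul_assoc]
  gcongr
  linarith

/-- negativity of the energy `J_λ` along a ray. -/
theorem energy_negative_along_ray
    {N : ℕ} (hN : 2 ≤ N) (Ω : Set (Euc N)) (hΩo : IsOpen Ω)
    (hΩb : Bornology.IsBounded Ω) (s : ℝ) (hs : s ∈ Set.Ioo (0:ℝ) 1)
    (Q : Set (Euc N × Euc N)) (hQ : Q = (Ωᶜ ×ˢ Ωᶜ)ᶜ)
    (p : Fin N → Euc N × Euc N → ℝ)
    (hp_cont : ∀ i, ContinuousOn (p i) (closure Q))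
    (hp_symm : ∀ i, ∀ z ∈ closure Q, p i z = p i (z.2, z.1))
    (hp_bounds : ∀ i, ∃ pm pp : ℝ, 1 < pm ∧
      ∀ z ∈ closure Q, pm ≤ p i z ∧ p i z ≤ pp)
    (pM : Euc N → ℝ) (hpM : ∀ x, pM x = ⨆ i, p i (x, x))
    (Pm : ℝ) (hPm : IsGLB {y : ℝ | ∃ i : Fin N, ∃ z ∈ closure Q, p i z = y} Pm)
    (r : Euc N → ℝ) (hr_cont : ContinuousOn r (closure Ω))
    (hr : ∀ x ∈ closure Ω, 1 < r x ∧ r x < Pm) :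
    ∀ lam > (0:ℝ), ∃ ω : Euc N → ℝ, memX0 Ω Q s p pM ω ∧
      (∀ᵐ x : Euc N, 0 ≤ ω x) ∧ ¬ (ω =ᵐ[volume] (fun _ => (0:ℝ))) ∧
      ∃ t₀ > (0:ℝ), ∀ t ∈ Set.Ioo (0:ℝ) t₀,
        Jfun Ω Q s p pM r lam (fun x => t * ω x) < 0 := by
  intro lam hlam
  have hne : Ω.Nonempty := by
    rw [Set.nonempty_iff_ne_empty]
    rintro rfl
    have hQe : Q = ∅ := by simp [hQ]
    have h : Pm + 1 ≤ Pm := hPm.2 (by rintro y ⟨i, z, hz, -⟩; simp [hQe] at hz)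
    linarith
  have hQo : IsOpen Q := by
    rw [hQ]
    exact (hΩo.isClosed_compl.prod hΩo.isClosed_compl).isOpen_compl
  have hQm := hQo.measurableSet
  have hΩm := hΩo.measurableSet
  have hΩfin : volume Ω < ⊤ := hΩb.measure_lt_top
  have hPm_le : ∀ i, ∀ z ∈ Q, Pm ≤ p i z := fun i z hz => hPm.1 ⟨i, z, subset_closure hz, rfl⟩
  obtain ⟨x0, hx0⟩ := hne
  have hPm1 : 1 < Pm := (hr x0 (subset_closure hx0)).1.trans (hr x0 (subset_closure hx0)).2
  have hp1 : ∀ i, ∀ z ∈ Q, 1 < p i z := fun i z hz => hPm1.trans_le (hPm_le i z hz)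
  have hpM_le : ∀ x ∈ Ω, Pm ≤ pM x := by
    intro x hx
    rw [hpM]
    exact (hPm_le ⟨0, by omega⟩ (x, x) (by simp [hQ, hx])).trans
      (le_ciSup (f := fun i => p i (x, x)) (Set.finite_range _).bddAbove _)
  obtain ⟨xr, hxr, hmax⟩ := hΩb.isCompact_closure.exists_isMaxOn ⟨x0, subset_closure hx0⟩ hr_cont
  have hr0 : r xr < Pm := (hr xr hxr).2
  have hr_le : ∀ x ∈ Ω, r x ≤ r xr := fun x hx => hmax (subset_closure hx)
  have hr1 : ∀ x ∈ Ω, 1 < r x := fun x hx => (hr x (subset_closure hx)).1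
  obtain ⟨ρ', hρ'0, hρ'⟩ := Metric.isOpen_iff.1 hΩo x0 hx0
  obtain ⟨ρ, hρ0, hρ1, hball⟩ : ∃ ρ > (0:ℝ), ρ ≤ 1 ∧ Metric.ball x0 ρ ⊆ Ω :=
    ⟨min ρ' 1, by positivity, min_le_right _ _,
      (Metric.ball_subset_ball (min_le_left _ _)).trans hρ'⟩
  have hG : ∀ i, IntegrableOn (fun z : Euc N × Euc N => |cone x0 ρ z.1 - cone x0 ρ z.2| ^ p i z /
      ‖z.1 - z.2‖ ^ (s * p i z + N)) Q := fun i =>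
    integrableOn_gagliardo_cone hN hs hQm ((hp_cont i).mono subset_closure) (hp1 i) x0 hρ1
  have habs : ∀ x, |cone x0 ρ x| = cone x0 ρ x := fun x => abs_of_nonneg (cone_nonneg _ _ _)
  have hballpos : 0 < volume (Metric.ball x0 ρ) := Metric.measure_ball_pos _ _ hρ0
  -- Needed because the integral entering `J_λ` with a minus sign must not take the junk value `0`.
  have hR : ∀ t : ℝ, 0 ≤ t → t ≤ 1 →
      IntegrableOn (fun x => |t * cone x0 ρ x| ^ r x / r x) Ω := by
    intro t ht ht1
    refine (integrableOn_const (C := (1:ℝ)) hΩfin.ne).mono' ?_ ?_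
    · have hrm : AEMeasurable r (volume.restrict Ω) :=
        (hr_cont.mono subset_closure).aemeasurable hΩm
      have h1 : AEMeasurable (fun x => |t * cone x0 ρ x|) (volume.restrict Ω) := by
        have : Continuous (fun x => |t * cone x0 ρ x|) := by
          have := cone_continuous x0 ρ
          fun_prop
        exact this.aemeasurable
      exact ((h1.pow hrm).div hrm).aestronglyMeasurable
    · refine (ae_restrict_iff' hΩm).2 (Eventually.of_forall fun x hx => ?_)
      have h1 := hr1 x hx
      rw [Real.norm_of_nonneg (by positivity), div_le_one (by linarith)]
      refine (Real.rpow_le_one (abs_nonneg _) ?_ (by linarith)).trans h1.le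
      rw [abs_mul, habs, abs_of_nonneg ht]
      exact mul_le_one₀ ht1 (cone_nonneg _ _ _) (cone_le_one _ hρ1 _)
  have hC : 0 < ∫ x in Ω, cone x0 ρ x ^ r x / r x := by
    have hint := hR 1 zero_le_one le_rfl
    simp only [one_mul, habs] at hint
    rw [setIntegral_pos_iff_support_of_nonneg_ae _ hint]
    · refine hballpos.trans_le (measure_mono fun x hx => ⟨?_, hball hx⟩)
      have h1 := hr1 x (hball hx)
      have h2 := cone_pos hx
      exact (by positivity : (0:ℝ) < cone x0 ρ x ^ r x / r x).ne'
    · refine (ae_restrict_iff' hΩm).2 (Eventually.of_forall fun x hx => ?_)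
      have h1 := hr1 x hx
      have h2 := cone_nonneg x0 ρ x
      exact (by positivity : (0:ℝ) ≤ cone x0 ρ x ^ r x / r x)
  refine ⟨cone x0 ρ, ⟨⟨(cone_continuous x0 ρ).measurable, ?_, fun i => ⟨1, one_pos, ?_⟩⟩,
    Eventually.of_forall fun x hx => cone_eq_zero fun h => hx (hball h)⟩,
    Eventually.of_forall (cone_nonneg x0 ρ), ?_, ?_⟩
  · refine (setLIntegral_mono' (g := fun _ => 1) hΩm fun x hx => ?_).trans_lt (by simpa using hΩfin)
    rw [ENNReal.ofReal_le_one, habs]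
    exact Real.rpow_le_one (cone_nonneg _ _ _) (cone_le_one _ hρ1 _) (by linarith [hpM_le x hx])
  · simp only [Real.one_rpow, one_mul]
    exact (hG i).lintegral_lt_top
  · intro h
    have h0 : volume {x | ¬ cone x0 ρ x = 0} = 0 := h
    exact absurd (measure_mono_null (fun x hx => (cone_pos hx).ne') h0) hballpos.ne'
  set K : ℝ := (∑ i, ∫ z in Q, |cone x0 ρ z.1 - cone x0 ρ z.2| ^ p i z /
      ‖z.1 - z.2‖ ^ (s * p i z + N)) + volume.real Ω with hK
  have hK0 : 0 ≤ K := by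
    refine add_nonneg (Finset.sum_nonneg fun i _ => integral_nonneg fun z => ?_)
      measureReal_nonneg
    simp only [Pi.zero_apply]
    positivity
  obtain ⟨t₀, ht₀, ht₀1, hsmall⟩ := exists_small_rpow hr0 hK0 (mul_pos hlam hC)
  refine ⟨t₀, ht₀, fun t ht => ?_⟩
  have h := hsmall t ht
  have ht0 : 0 < t := ht.1
  have ht1 : t ≤ 1 := ht.2.le.trans ht₀1
  have hA : ∀ i, ∫ z in Q, |t * cone x0 ρ z.1 - t * cone x0 ρ z.2| ^ p i z /
      ‖z.1 - z.2‖ ^ (s * p i z + N) / p i z ≤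
      t ^ Pm * ∫ z in Q, |cone x0 ρ z.1 - cone x0 ρ z.2| ^ p i z /
      ‖z.1 - z.2‖ ^ (s * p i z + N) := by
    intro i
    rw [← integral_const_mul]
    refine integral_mono_of_nonneg ?_ ((hG i).const_mul _) ?_
    · refine (ae_restrict_iff' hQm).2 (Eventually.of_forall fun z hz => ?_)
      have := hp1 i z hz
      simp only [Pi.zero_apply]
      positivity
    · refine (ae_restrict_iff' hQm).2 (Eventually.of_forall fun z hz => ?_)
      have hp := hp1 i z hz
      have hle : t ^ p i z ≤ t ^ Pm := Real.rpow_le_rpow_of_exponent_ge ht0 ht1 (hPm_le i z hz)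
      simp only
      rw [← mul_sub, abs_mul, abs_of_pos ht0, Real.mul_rpow ht0.le (abs_nonneg _), mul_div_assoc]
      refine (div_le_self (by positivity) hp.le).trans ?_
      gcongr
  have hB : ∫ x in Ω, |t * cone x0 ρ x| ^ pM x / pM x ≤ t ^ Pm * volume.real Ω := by
    have hconst : t ^ Pm * volume.real Ω = ∫ x in Ω, t ^ Pm := by
      rw [setIntegral_const, smul_eq_mul, mul_comm]
    rw [hconst]
    refine integral_mono_of_nonneg ?_ (integrableOn_const hΩfin.ne) ?_
    · refine (ae_restrict_iff' hΩm).2 (Eventually.of_forall fun x hx => ?_)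
      have := hpM_le x hx
      have : 0 < pM x := by linarith
      simp only [Pi.zero_apply]
      positivity
    · refine (ae_restrict_iff' hΩm).2 (Eventually.of_forall fun x hx => ?_)
      have hp := hpM_le x hx
      have hle : t ^ pM x ≤ t ^ Pm := Real.rpow_le_rpow_of_exponent_ge ht0 ht1 hp
      simp only
      refine (div_le_self (by positivity) (by linarith)).trans ?_
      rw [abs_mul, abs_of_pos ht0, habs, Real.mul_rpow ht0.le (cone_nonneg _ _ _)]
      refine (mul_le_of_le_one_right (by positivity) ?_).trans hle
      exact Real.rpow_le_one (cone_nonneg _ _ _) (cone_le_one _ hρ1 _) (by linarith)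
  have hD : t ^ r xr * ∫ x in Ω, cone x0 ρ x ^ r x / r x ≤
      ∫ x in Ω, |t * cone x0 ρ x| ^ r x / r x := by
    rw [← integral_const_mul]
    refine integral_mono_of_nonneg ?_ (hR t ht0.le ht1) ?_
    · refine (ae_restrict_iff' hΩm).2 (Eventually.of_forall fun x hx => ?_)
      have h1 := hr1 x hx
      have h2 := cone_nonneg x0 ρ x
      simp only [Pi.zero_apply]
      positivity
    · refine (ae_restrict_iff' hΩm).2 (Eventually.of_forall fun x hx => ?_)
      have h1 := hr1 x hx
      have h2 := cone_nonneg x0 ρ x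
      have hle : t ^ r xr ≤ t ^ r x := Real.rpow_le_rpow_of_exponent_ge ht0 ht1 (hr_le x hx)
      simp only
      rw [abs_mul, abs_of_pos ht0, habs, Real.mul_rpow ht0.le h2, mul_div_assoc]
      gcongr
  have hAs := Finset.sum_le_sum fun i (_ : i ∈ Finset.univ) => hA i
  rw [← Finset.mul_sum] at hAs
  have hDl := mul_le_mul_of_nonneg_left hD hlam.le
  unfold Jfun
  rw [hK, mul_add] at h
  linarith
end
end
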